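/- Let 𝒢 = G_1, …, G_T be a temporal graph on n vertices in which every snapshot is bipartite, let OPT denote the minimum of Cost(Ψ) over all temporal sequence 2-colourings Ψ of 𝒢, and let M denote the minimum number of monochromatic edges over all 2-colourings of the auxiliary static graph α(𝒢). Then M ≤ OPT ≤ 2M. -/

import Mathlib

/-!
Complementing every second snapshot (`twist`) turns a colour sequence `φ` into a colouring of
`α(𝒢)` whose monochromatic `C`-edges are exactly the colour changes of `φ`, and every colouring
of `α(𝒢)` arises in this way. If `φ` is proper in each snapshot, no `S`-edge is monochromatic,
so `M ≤ OPT`.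

For the other bound, take an optimal colouring of `α(𝒢)` and untwist it to `φ`. On a component
of a snapshot the `S`-edges form a complete bipartite graph. Relative to a proper colouring `c`,
the monochromatic `S`-edges are the edges of the cut separating the vertices where `φ` agrees
with `c` from those where it does not. A complete bipartite graph which is connected has edge
expansion at least `1` (`min_flip_le`), so the smaller side of the cut, whose recolouring makes
`φ` proper on the component, has at most as many vertices as the cut has edges
(`component_flip`). Each recoloured vertex creates at most two colour changes (`finCost_le`), so
the resulting proper sequence costs at most the number of monochromatic `C`-edges plus twice the
number of monochromatic `S`-edges.
-/

open Finset

/-- The cost of a temporal sequence colouring `Ψ` of a temporal graph of lifetime `T`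
(snapshots indexed `0, 1, …, T - 1`): the number of pairs `(v, t)` with `t` a
non-final time step such that `v` changes colour between snapshots `t` and `t + 1`. -/
def tCost {V : Type*} [Fintype V] (T : ℕ) (Ψ : ℕ → V → Fin 2) : ℕ :=
  ∑ t ∈ Finset.range (T - 1), (Finset.univ.filter fun v => Ψ t v ≠ Ψ (t + 1) v).card

/-- The auxiliary static graph `α(𝒢)` on the vertex set `V × Fin T`: the edge set is
`C ∪ S`, where `C` joins `(v, t)` to `(v, t + 1)` for every vertex `v` and every
non-final time step `t`, and `S` joins `(v, t)` to `(w, t)` whenever `v` and `w` are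
joined in the snapshot `G t` by a walk of odd length (equivalently, they lie in the same
connected component of `G t` and get different colours in every proper 2-colouring of it). -/
def alphaGraph {V : Type*} (T : ℕ) (G : ℕ → SimpleGraph V) :
    SimpleGraph (V × Fin T) :=
  SimpleGraph.fromRel (fun x y =>
    (x.1 = y.1 ∧ (x.2 : ℕ) + 1 = (y.2 : ℕ)) ∨
    ((x.2 : ℕ) = (y.2 : ℕ) ∧ ∃ p : (G (x.2 : ℕ)).Walk x.1 y.1, Odd p.length))

/-- The number of monochromatic edges of the static graph `A` under the 2-colouring `χ`. -/
noncomputable def monoCount {W : Type*} (A : SimpleGraph W) (χ : W → Fin 2) : ℕ :=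
  {e : Sym2 W | e ∈ A.edgeSet ∧ (e.map χ).IsDiag}.ncard

/-! ### Recolouring a single snapshot -/

/-- In a properly 2-coloured graph, the parity of a walk is determined by the colours of its
endpoints. -/
lemma walk_parity {V : Type*} {H : SimpleGraph V} {c : V → Fin 2}
    (hc : ∀ u v, H.Adj u v → c u ≠ c v) {u v : V} (p : H.Walk u v) :
    Odd p.length ↔ c u ≠ c v := by
  induction p with
  | nil => simp
  | @cons a b d h q ih =>
    have h1 := hc _ _ h
    rw [SimpleGraph.Walk.length_cons, Nat.odd_add_one, ih]
    generalize c a = x at *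
    generalize c b = y at *
    generalize c d = z at *
    clear * - h1
    revert x y z
    decide

/-- The edge expansion of a complete bipartite graph with both sides nonempty, or with a single
vertex, is at least `1`. Here `x₀ + x₁` and `y₀ + y₁` are the sizes of the two sides, split by
the current colour of the vertices. -/
lemma min_flip_le (x₀ x₁ y₀ y₁ : ℕ) (hx : x₀ + x₁ = 0 → y₀ + y₁ ≤ 1)
    (hy : y₀ + y₁ = 0 → x₀ + x₁ ≤ 1) :
    x₁ + y₀ ≤ x₀ * y₀ + x₁ * y₁ ∨ x₀ + y₁ ≤ x₀ * y₀ + x₁ * y₁ := by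
  rcases Nat.eq_zero_or_pos x₀ with h | hx0
  · subst h
    rcases Nat.eq_zero_or_pos x₁ with h | h
    · subst h; simp at *; omega
    · right; nlinarith
  rcases Nat.eq_zero_or_pos x₁ with h | hx1
  · subst h; left; nlinarith
  rcases Nat.eq_zero_or_pos y₀ with h | hy0
  · subst h
    rcases Nat.eq_zero_or_pos y₁ with h | h
    · subst h; simp at *; omega
    · left; nlinarith
  rcases Nat.eq_zero_or_pos y₁ with h | hy1
  · subst h; right; nlinarith
  obtain ⟨a, rfl⟩ := Nat.exists_eq_add_of_lt hx0
  obtain ⟨b, rfl⟩ := Nat.exists_eq_add_of_lt hx1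
  obtain ⟨d, rfl⟩ := Nat.exists_eq_add_of_lt hy0
  obtain ⟨e, rfl⟩ := Nat.exists_eq_add_of_lt hy1
  by_contra! h
  nlinarith [h.1, h.2, Nat.zero_le (a * d), Nat.zero_le (b * e)]

/-- A component with two vertices of the same colour contains a vertex of the other colour. -/
lemma exists_other_colour {V : Type*} {H : SimpleGraph V} {c : V → Fin 2}
    (hc : ∀ u v, H.Adj u v → c u ≠ c v) {u v : V} (huv : u ≠ v) (h : H.Reachable u v) :
    ∃ w, H.Reachable w u ∧ c w ≠ c u := by
  obtain ⟨p⟩ := h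
  cases p with
  | nil => exact absurd rfl huv
  | @cons _ b _ hab q => exact ⟨b, hab.symm.reachable, (hc _ _ hab).symm⟩

open Classical in
/-- The pairs of vertices joined by an odd walk of `H` on which `φ` is constant, listed with the
endpoint of reference colour `0` first, so that each unordered pair occurs once. -/
noncomputable def badPairs {V : Type*} [Fintype V] (H : SimpleGraph V) (c φ : V → Fin 2) :
    Finset (V × V) :=
  Finset.univ.filter fun p => c p.1 = 0 ∧ c p.2 = 1 ∧ H.Reachable p.1 p.2 ∧ φ p.1 = φ p.2

open Classical in
/-- Within one component `K`, either `c` or its complement differs from `φ` in at most as many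
vertices as there are bad pairs in `K`. -/
lemma component_flip {V : Type*} [Fintype V] (H : SimpleGraph V) (c φ : V → Fin 2)
    (hc : ∀ u v, H.Adj u v → c u ≠ c v) (K : H.ConnectedComponent) :
    ∃ b : Fin 2, (Finset.univ.filter fun v =>
        c v + b ≠ φ v ∧ H.connectedComponentMk v = K).card ≤
      ((badPairs H c φ).filter fun p => H.connectedComponentMk p.1 = K).card := by
  let S : Fin 2 → Fin 2 → Finset V := fun i j =>
    Finset.univ.filter fun v => H.connectedComponentMk v = K ∧ c v = i ∧ φ v = j
  have hpairs : (S 0 0 ×ˢ S 1 0 ∪ S 0 1 ×ˢ S 1 1).card ≤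
      ((badPairs H c φ).filter fun p => H.connectedComponentMk p.1 = K).card := by
    apply Finset.card_le_card
    rintro ⟨u, v⟩ h
    simp only [S, badPairs, mem_union, mem_product, mem_filter, mem_univ, true_and] at h ⊢
    have key : H.connectedComponentMk u = K → H.connectedComponentMk v = K →
      H.Reachable u v := fun h1 h2 => SimpleGraph.ConnectedComponent.exact (h1.trans h2.symm)
    rcases h with ⟨⟨h1, h2, h3⟩, h4, h5, h6⟩ | ⟨⟨h1, h2, h3⟩, h4, h5, h6⟩
    · exact ⟨⟨h2, h5, key h1 h4, h3.trans h6.symm⟩, h1⟩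
    · exact ⟨⟨h2, h5, key h1 h4, h3.trans h6.symm⟩, h1⟩
  have hdisj : Disjoint (S 0 0 ×ˢ S 1 0) (S 0 1 ×ˢ S 1 1) := by
    rw [Finset.disjoint_left]
    rintro ⟨u, v⟩ h h'
    simp only [S, mem_product, mem_filter, mem_univ, true_and] at h h'
    exact absurd (h.1.2.2.symm.trans h'.1.2.2) (by decide)
  rw [Finset.card_union_of_disjoint hdisj, card_product, card_product] at hpairs
  -- a side of the component can be empty only if the other is a single vertex
  have hside : ∀ i j : Fin 2, i ≠ j → (S i 0).card + (S i 1).card = 0 →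
      (S j 0).card + (S j 1).card ≤ 1 := by
    intro i j hij h0
    have hempty : ∀ w, H.connectedComponentMk w = K → c w ≠ i := by
      intro w hw hwi
      have h00 : S i 0 = ∅ := Finset.card_eq_zero.1 (by omega)
      have h01 : S i 1 = ∅ := Finset.card_eq_zero.1 (by omega)
      have hφ : φ w = 0 ∨ φ w = 1 := by generalize φ w = x; revert x; decide
      rcases hφ with h | h
      · exact Finset.notMem_empty w (h00 ▸ (by simp [S, hw, hwi, h]))
      · exact Finset.notMem_empty w (h01 ▸ (by simp [S, hw, hwi, h]))
    rw [← Finset.card_union_of_disjoint, Finset.card_le_one]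
    · intro u hu v hv
      by_contra huv
      have hK : ∀ x ∈ S j 0 ∪ S j 1, H.connectedComponentMk x = K ∧ c x = j := by
        intro x hx
        simp only [S, mem_union, mem_filter, mem_univ, true_and] at hx
        tauto
      obtain ⟨w, hw, hcw⟩ := exists_other_colour hc huv
        (SimpleGraph.ConnectedComponent.exact ((hK u hu).1.trans (hK v hv).1.symm))
      have h1 := hempty w ((SimpleGraph.ConnectedComponent.sound hw).trans (hK u hu).1)
      rw [(hK u hu).2] at hcw
      omega
    · rw [Finset.disjoint_left]
      intro u h h'
      simp only [S, mem_filter, mem_univ, true_and] at h h'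
      exact absurd (h.2.2.symm.trans h'.2.2) (by decide)
  have hflip : ∀ b : Fin 2, (Finset.univ.filter fun v =>
        c v + b ≠ φ v ∧ H.connectedComponentMk v = K).card ≤
      (S 0 (b + 1)).card + (S 1 b).card := by
    intro b
    refine (Finset.card_le_card ?_).trans (Finset.card_union_le _ _)
    intro v hv
    simp only [S, mem_union, mem_filter, mem_univ, true_and] at hv ⊢
    obtain ⟨h1, h2⟩ := hv
    simp only [h2, true_and]
    generalize c v = x at *
    generalize φ v = y at *
    clear * - h1
    revert b x y
    decide
  rcases min_flip_le _ _ _ _ (hside 0 1 (by decide)) (hside 1 0 (by decide)) with h | h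
  · exact ⟨0, (hflip 0).trans (h.trans hpairs)⟩
  · exact ⟨1, (hflip 1).trans (h.trans hpairs)⟩

/-- Any colouring of a bipartite snapshot can be made proper by recolouring at most one vertex
per bad pair. -/
lemma exists_proper_near {V : Type*} [Fintype V] (H : SimpleGraph V) (c φ : V → Fin 2)
    (hc : ∀ u v, H.Adj u v → c u ≠ c v) :
    ∃ ψ : V → Fin 2, (∀ u v, H.Adj u v → ψ u ≠ ψ v) ∧
      (Finset.univ.filter fun v => ψ v ≠ φ v).card ≤ (badPairs H c φ).card := by
  classical
  choose b hb using component_flip H c φ hc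
  refine ⟨fun v => c v + b (H.connectedComponentMk v), ?_, ?_⟩
  · intro u v huv h
    simp only [SimpleGraph.ConnectedComponent.sound huv.reachable] at h
    exact hc u v huv (add_right_cancel h)
  · rw [Finset.card_eq_sum_card_fiberwise (f := H.connectedComponentMk) (t := Finset.univ)
        (fun _ _ => Finset.mem_coe.2 (Finset.mem_univ _)),
      Finset.card_eq_sum_card_fiberwise (s := badPairs H c φ)
        (f := fun p => H.connectedComponentMk p.1) (t := Finset.univ)
        (fun _ _ => Finset.mem_coe.2 (Finset.mem_univ _))]
    refine Finset.sum_le_sum fun K _ => le_trans (Finset.card_le_card ?_) (hb K)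
    intro v hv
    simp only [mem_filter, mem_univ, true_and] at hv ⊢
    obtain ⟨h1, rfl⟩ := hv
    exact ⟨h1, rfl⟩

/-! ### Cost of a recoloured sequence -/

/-- The cost of a colour sequence indexed by `Fin (n + 1)`. -/
def finCost {V : Type*} [Fintype V] {n : ℕ} (ψ : Fin (n + 1) → V → Fin 2) : ℕ :=
  ∑ i : Fin n, (Finset.univ.filter fun v => ψ i.castSucc v ≠ ψ i.succ v).card

lemma tCost_eq_finCost {V : Type*} [Fintype V] (n : ℕ) (Ψ : ℕ → V → Fin 2) :
    tCost (n + 1) Ψ = finCost fun i : Fin (n + 1) => Ψ i := by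
  simp [tCost, finCost, Finset.sum_range]

/-- Recolouring one vertex at one time creates at most two new colour changes. -/
lemma finCost_le {V : Type*} [Fintype V] {n : ℕ} (ψ φ : Fin (n + 1) → V → Fin 2) :
    finCost ψ ≤ finCost φ + 2 * ∑ i, (Finset.univ.filter fun v => ψ i v ≠ φ i v).card := by
  classical
  set F : Fin (n + 1) → ℕ := fun i => (Finset.univ.filter fun v => ψ i v ≠ φ i v).card
  have h1 : ∑ i : Fin n, F i.castSucc ≤ ∑ i, F i := by
    rw [Fin.sum_univ_castSucc]; omega
  have h2 : ∑ i : Fin n, F i.succ ≤ ∑ i, F i := by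
    rw [Fin.sum_univ_succ]; omega
  have h3 : finCost ψ ≤ finCost φ + ∑ i : Fin n, F i.castSucc + ∑ i : Fin n, F i.succ := by
    unfold finCost
    rw [← Finset.sum_add_distrib, ← Finset.sum_add_distrib]
    refine Finset.sum_le_sum fun i _ => ?_
    refine (Finset.card_le_card ?_).trans ((Finset.card_union_le _ _).trans
      (Nat.add_le_add_right (Finset.card_union_le _ _) _))
    intro v hv
    simp only [mem_union, mem_filter, mem_univ, true_and] at hv ⊢
    by_contra! h
    exact hv (h.1.2.trans (h.1.1.trans h.2.symm))
  change _ ≤ _ + 2 * ∑ i, F i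
  omega

/-! ### Monochromatic edges of the auxiliary graph -/

lemma cast_ne_iff (a b x : Fin 2) : a + x = b + (x + 1) ↔ a ≠ b := by
  revert a b x; decide

/-- The colouring of `α(𝒢)` obtained from a colour sequence by complementing every second
snapshot: a `C`-edge becomes monochromatic exactly when its vertex changes colour. -/
def twist {V : Type*} {n : ℕ} (φ : Fin (n + 1) → V → Fin 2) : V × Fin (n + 1) → Fin 2 :=
  fun x => φ x.2 x.1 + Fin.ofNat 2 x.2

lemma ofNat_succ (k : ℕ) : Fin.ofNat 2 (k + 1) = Fin.ofNat 2 k + 1 := by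
  ext; simp [Fin.val_add]

lemma exists_eq_twist {V : Type*} {n : ℕ} (χ : V × Fin (n + 1) → Fin 2) :
    ∃ φ : Fin (n + 1) → V → Fin 2, twist φ = χ :=
  ⟨fun i v => χ (v, i) - Fin.ofNat 2 i, by ext1 x; simp [twist]⟩

lemma alpha_adj {V : Type*} (T : ℕ) (G : ℕ → SimpleGraph V) (x y : V × Fin T) :
    (alphaGraph T G).Adj x y ↔ x ≠ y ∧
      (((x.1 = y.1 ∧ (x.2 : ℕ) + 1 = y.2) ∨
        ((x.2 : ℕ) = y.2 ∧ ∃ p : (G x.2).Walk x.1 y.1, Odd p.length)) ∨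
      ((y.1 = x.1 ∧ (y.2 : ℕ) + 1 = x.2) ∨
        ((y.2 : ℕ) = x.2 ∧ ∃ p : (G y.2).Walk y.1 x.1, Odd p.length))) := by
  rw [alphaGraph, SimpleGraph.fromRel_adj]

/-- The pairs `(i, v)` such that `v` changes colour between times `i` and `i + 1`. -/
def changes {V : Type*} [Fintype V] {n : ℕ} (φ : Fin (n + 1) → V → Fin 2) :
    Finset (Fin n × V) :=
  Finset.univ.filter fun q => φ q.1.castSucc q.2 ≠ φ q.1.succ q.2

lemma card_changes {V : Type*} [Fintype V] {n : ℕ} (φ : Fin (n + 1) → V → Fin 2) :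
    (changes φ).card = finCost φ := by
  classical
  rw [finCost, ← Finset.card_sigma]
  refine Finset.card_bij' (fun q _ => ⟨q.1, q.2⟩) (fun q _ => (q.1, q.2)) ?_ ?_ ?_ ?_ <;>
    simp [changes]

/-- For a proper colour sequence no `S`-edge is monochromatic in the twisted colouring. -/
lemma monoCount_twist_le {V : Type*} [Fintype V] {n : ℕ} (G : ℕ → SimpleGraph V)
    (φ : Fin (n + 1) → V → Fin 2)
    (hφ : ∀ i : Fin (n + 1), ∀ u v, (G i).Adj u v → φ i u ≠ φ i v) :
    monoCount (alphaGraph (n + 1) G) (twist φ) ≤ finCost φ := by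
  classical
  rw [← card_changes, monoCount]
  have hrel : ∀ x y : V × Fin (n + 1), twist φ x = twist φ y →
      ((x.1 = y.1 ∧ (x.2 : ℕ) + 1 = y.2) ∨
        ((x.2 : ℕ) = y.2 ∧ ∃ p : (G x.2).Walk x.1 y.1, Odd p.length)) →
      ∃ q ∈ changes φ, s((q.2, q.1.castSucc), (q.2, q.1.succ)) = s(x, y) := by
    rintro ⟨u, i⟩ ⟨v, j⟩ hxy (⟨h1, h2⟩ | ⟨h1, p, hp⟩)
    · simp only at h1 h2
      subst h1
      have hi : (i : ℕ) < n := by have := j.2; omega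
      obtain ⟨i, rfl⟩ : ∃ k : Fin n, k.castSucc = i := ⟨⟨i, hi⟩, rfl⟩
      obtain rfl : j = i.succ := by ext; simp [← h2]
      refine ⟨(i, u), ?_, rfl⟩
      simp only [twist, Fin.val_castSucc, Fin.val_succ, ofNat_succ,
        cast_ne_iff] at hxy
      simpa [changes] using hxy
    · obtain rfl : i = j := Fin.ext h1
      exact absurd (add_right_cancel hxy) ((walk_parity (hφ i) p).1 hp)
  rw [← Set.ncard_coe_finset]
  refine le_trans (Set.ncard_le_ncard (t := (fun q : Fin n × V =>
    s((q.2, q.1.castSucc), (q.2, q.1.succ))) '' (changes φ : Set (Fin n × V))) ?_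
      ((Finset.finite_toSet _).image _)) (Set.ncard_image_le (Finset.finite_toSet _))
  rintro e ⟨he, hd⟩
  induction e using Sym2.ind with
  | _ x y =>
    rw [SimpleGraph.mem_edgeSet, alpha_adj] at he
    rw [Sym2.map_mk, Sym2.mk_isDiag_iff] at hd
    rcases he.2 with h | h
    · exact hrel x y hd h
    · rw [Sym2.eq_swap]
      exact hrel y x hd.symm h

/-- Every colour change gives a monochromatic `C`-edge and every bad pair a monochromatic
`S`-edge of the twisted colouring, and all these edges are distinct. -/
lemma le_monoCount_twist {V : Type*} [Fintype V] {n : ℕ} (G : ℕ → SimpleGraph V)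
    (c φ : Fin (n + 1) → V → Fin 2)
    (hc : ∀ i : Fin (n + 1), ∀ u v, (G i).Adj u v → c i u ≠ c i v) :
    finCost φ + ∑ i : Fin (n + 1), (badPairs (G i) (c i) (φ i)).card ≤
      monoCount (alphaGraph (n + 1) G) (twist φ) := by
  classical
  let P : Finset (Σ _ : Fin (n + 1), V × V) :=
    Finset.univ.sigma fun i => badPairs (G i) (c i) (φ i)
  let f : Fin n × V → Sym2 (V × Fin (n + 1)) := fun q =>
    s((q.2, q.1.castSucc), (q.2, q.1.succ))
  let g : (Σ _ : Fin (n + 1), V × V) → Sym2 (V × Fin (n + 1)) := fun q =>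
    s((q.2.1, q.1), (q.2.2, q.1))
  have hf : Function.Injective f := by
    rintro ⟨i, u⟩ ⟨j, v⟩ h
    simp only [f, Sym2.eq_iff, Prod.mk.injEq, Fin.ext_iff, Fin.val_castSucc, Fin.val_succ] at h
    rcases h with h | h
    · exact Prod.ext (Fin.ext h.1.2) h.1.1
    · omega
  have hg : Set.InjOn g P := by
    rintro ⟨i, u, v⟩ h ⟨j, u', v'⟩ h' hgg
    simp only [P, badPairs, coe_sigma, Set.mem_sigma_iff, mem_coe, mem_filter, mem_univ,
      true_and] at h h'
    simp only [g, Sym2.eq_iff, Prod.mk.injEq] at hgg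
    rcases hgg with ⟨⟨rfl, rfl⟩, rfl, -⟩ | ⟨⟨rfl, rfl⟩, rfl, -⟩
    · rfl
    · exact absurd (h.1.symm.trans h'.2.1) (by decide)
  have hfg : Disjoint ((changes φ).image f) (P.image g) := by
    rw [Finset.disjoint_left]
    intro e he he'
    obtain ⟨⟨i, u⟩, -, rfl⟩ := Finset.mem_image.1 he
    obtain ⟨⟨j, v, w⟩, -, h⟩ := Finset.mem_image.1 he'
    simp only [f, g, Sym2.eq_iff, Prod.mk.injEq, Fin.ext_iff, Fin.val_castSucc,
      Fin.val_succ] at h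
    omega
  have hcard : ((changes φ).image f ∪ P.image g).card =
      finCost φ + ∑ i : Fin (n + 1), (badPairs (G i) (c i) (φ i)).card := by
    rw [Finset.card_union_of_disjoint hfg, Finset.card_image_of_injective _ hf,
      Finset.card_image_of_injOn hg, card_changes, Finset.card_sigma]
  rw [← hcard, monoCount, ← Set.ncard_coe_finset]
  refine Set.ncard_le_ncard ?_ (Set.toFinite _)
  intro e he
  rw [Finset.mem_coe, Finset.mem_union, Finset.mem_image, Finset.mem_image] at he
  rcases he with ⟨⟨i, u⟩, h, rfl⟩ | ⟨⟨i, u, v⟩, h, rfl⟩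
  · simp only [changes, mem_filter, mem_univ, true_and] at h
    refine ⟨?_, ?_⟩
    · rw [SimpleGraph.mem_edgeSet, alpha_adj]
      refine ⟨?_, Or.inl (Or.inl ⟨rfl, by simp⟩)⟩
      simp [Fin.ext_iff]
    · simp only [f, Sym2.map_mk, Sym2.mk_isDiag_iff, twist, Fin.val_castSucc, Fin.val_succ,
        ofNat_succ, cast_ne_iff]
      exact h
  · simp only [P, badPairs, mem_sigma, mem_filter, mem_univ, true_and] at h
    obtain ⟨h0, h1, ⟨p⟩, h2⟩ := h
    have hne : c i u ≠ c i v := by rw [h0, h1]; decide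
    refine ⟨?_, ?_⟩
    · rw [SimpleGraph.mem_edgeSet, alpha_adj]
      refine ⟨?_, Or.inl (Or.inr ⟨rfl, p, (walk_parity (hc i) p).2 hne⟩)⟩
      rintro heq
      exact hne (congrArg (c i) (Prod.mk.inj heq).1)
    · simp [g, twist, h2]

/-! ### The two bounds -/

/-- Let `𝒢 = G_0, …, G_{T-1}` be a temporal graph in which every snapshot
is bipartite, let `OPT` be the minimum cost of a temporal sequence 2-colouring of `𝒢`, and
let `M` be the minimum number of monochromatic edges over all 2-colourings of the
auxiliary graph `α(𝒢)`.  Then `M ≤ OPT ≤ 2 * M`. -/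
theorem stmt3 {V : Type*} [Fintype V] (T : ℕ) (G : ℕ → SimpleGraph V)
    (hbip : ∀ t < T, ∃ c : V → Fin 2, ∀ u v, (G t).Adj u v → c u ≠ c v)
    (OPT M : ℕ)
    (hOPT : IsLeast {c | ∃ Ψ : ℕ → V → Fin 2,
      (∀ t < T, ∀ u v, (G t).Adj u v → Ψ t u ≠ Ψ t v) ∧ tCost T Ψ = c} OPT)
    (hM : IsLeast {c | ∃ χ : V × Fin T → Fin 2, monoCount (alphaGraph T G) χ = c} M) :
    M ≤ OPT ∧ OPT ≤ 2 * M := by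
  obtain ⟨⟨Ψ, hΨ, hΨc⟩, hOPTle⟩ := hOPT
  obtain ⟨⟨χ, hχ⟩, hMle⟩ := hM
  cases T with
  | zero =>
    have h1 : OPT = 0 := by rw [← hΨc]; simp [tCost]
    have h2 : M = 0 := by
      rw [← hχ, monoCount]
      convert Set.ncard_empty (Sym2 (V × Fin 0))
      ext e
      induction e using Sym2.ind with
      | _ x y => exact x.2.elim0
    omega
  | succ n =>
    constructor
    · refine (hMle ⟨twist fun i => Ψ i, rfl⟩).trans ?_
      rw [← hΨc, tCost_eq_finCost]
      exact monoCount_twist_le G _ fun i => hΨ i i.2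
    · obtain ⟨φ, rfl⟩ := exists_eq_twist χ
      choose c hc using fun i : Fin (n + 1) => hbip i i.2
      choose ψ hψ hψcard using fun i : Fin (n + 1) =>
        exists_proper_near (G i) (c i) (φ i) (hc i)
      have hle : OPT ≤ finCost ψ := by
        refine hOPTle ⟨fun t => if h : t < n + 1 then ψ ⟨t, h⟩ else 0, ?_, ?_⟩
        · intro t ht u v huv
          simpa [ht] using hψ ⟨t, ht⟩ u v huv
        · rw [tCost_eq_finCost]
          congr 1
          funext i
          exact dif_pos i.2
      have h1 := finCost_le ψ φ
      have h2 := le_monoCount_twist G c φ hc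
      have h3 := Finset.sum_le_sum fun i (_ : i ∈ Finset.univ) => hψcard i
      omega
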